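/- arXiv:1301.5442 — 2 statements merged into one kernel-verified Lean document; each statement's English description precedes it below -/
import Mathlib

section
/- Let k be a field, g a Lie algebra over k, V a k-vector space, and let Ω = (◁, ▷, f, {−,−}) and Ω' = (◁', ▷', f', {−,−}') be two Lie extending structures of g through V. There exists an isomorphism of Lie algebras ψ : g ⋈ V → g ⋈' V between the associated unified products which stabilizes g (ψ(g,0) = (g,0) for all g ∈ g) and co-stabilizes V (the V-component of ψ(g,x) is x) if and only if ◁' = ◁ and there exists a linear map r : V → g such that for all g ∈ g and x, y ∈ V: x ▷' g = x ▷ g + r(x ◁ g) − [r(x), g]; f'(x,y) = f(x,y) + r({x,y}) + [r(x), r(y)] + y ▷ r(x) − x ▷ r(y) + r(y ◁ r(x)) − r(x ◁ r(y)); and {x,y}' = {x,y} − x ◁ r(y) + y ◁ r(x). -/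
def IsLieBracket {L : Type*} [AddCommGroup L] (B : L → L → L) : Prop :=
  (∀ p, B p p = 0) ∧ ∀ p q r, B p (B q r) + B q (B r p) + B r (B p q) = 0

def unifiedBracket {k G V : Type*} [Field k] [LieRing G] [LieAlgebra k G]
    [AddCommGroup V] [Module k V]
    (tl : V →ₗ[k] G →ₗ[k] V) (tr : V →ₗ[k] G →ₗ[k] G)
    (f : V →ₗ[k] V →ₗ[k] G) (br : V →ₗ[k] V →ₗ[k] V) :
    G × V → G × V → G × V :=
  fun p q =>
    (⁅p.1, q.1⁆ + tr p.2 q.1 - tr q.2 p.1 + f p.2 q.2,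
     br p.2 q.2 + tl p.2 q.1 - tl q.2 p.1)

/-!
A linear automorphism of `G × V` stabilizing `G` and co-stabilizing `V` is a shear
`(g, x) ↦ (g + r x, x)` for some linear map `r : V → G`. Transporting a unified product along
this shear gives the unified product of another datum, with the same `◁`, and the cohomology
relations say that this datum is `Ω'`. Nothing is lost, because a unified product determines its
datum: `[(0, x), (g, 0)] = (x ▷ g, x ◁ g)` and `[(0, x), (0, y)] = (f(x, y), {x, y})`.
-/

section Shear

variable {R M N : Type*} [Semiring R] [AddCommGroup M] [AddCommMonoid N] [Module R M] [Module R N]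

/-- The shear `(m, n) ↦ (m + r n, n)` of `M × N` along `r`. It is `LinearEquiv.skewProd` with the
two factors exchanged. -/
def shear (r : N →ₗ[R] M) : (M × N) ≃ₗ[R] M × N :=
  LinearEquiv.prodComm R M N ≪≫ₗ
    (LinearEquiv.refl R N).skewProd (LinearEquiv.refl R M) r ≪≫ₗ LinearEquiv.prodComm R N M

@[simp]
theorem shear_apply (r : N →ₗ[R] M) (u : M × N) : shear r u = (u.1 + r u.2, u.2) :=
  rfl

theorem stabilizes_and_costabilizes_iff_exists_eq_shear {ψ : (M × N) ≃ₗ[R] M × N} :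
    ((∀ m : M, ψ (m, 0) = (m, 0)) ∧ ∀ u : M × N, (ψ u).2 = u.2) ↔
      ∃ r : N →ₗ[R] M, ψ = shear r := by
  constructor
  · rintro ⟨stab, costab⟩
    refine ⟨LinearMap.fst R M N ∘ₗ ψ.toLinearMap ∘ₗ LinearMap.inr R M N, LinearEquiv.ext ?_⟩
    rintro ⟨m, n⟩
    have fst_eq : (ψ (m, n)).1 = m + (ψ (0, n)).1 := by
      rw [← Prod.fst_add_snd (m, n), map_add, stab, Prod.fst_add]
    exact Prod.ext fst_eq (costab (m, n))
  · rintro ⟨r, rfl⟩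
    simp

end Shear

section Twist

attribute [local instance] LieRing.ofAssociativeRing

variable {R G V : Type*} [CommRing R] [LieRing G] [LieAlgebra R G] [AddCommGroup V] [Module R V]

/-- The action `▷` transported along `shear r`: `x ▷ g + r (x ◁ g) - [r x, g]`. -/
def twistedAction (tl : V →ₗ[R] G →ₗ[R] V) (tr : V →ₗ[R] G →ₗ[R] G) (r : V →ₗ[R] G) :
    V →ₗ[R] G →ₗ[R] G :=
  tr + tl.compr₂ r - (LieAlgebra.ad R G).toLinearMap ∘ₗ r

/-- The cocycle `f` transported along `shear r`:
`f(x, y) + r {x, y} + [r x, r y] + y ▷ r x - x ▷ r y + r (y ◁ r x) - r (x ◁ r y)`. -/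
def twistedCocycle (tl : V →ₗ[R] G →ₗ[R] V) (tr : V →ₗ[R] G →ₗ[R] G)
    (f : V →ₗ[R] V →ₗ[R] G) (br : V →ₗ[R] V →ₗ[R] V) (r : V →ₗ[R] G) :
    V →ₗ[R] V →ₗ[R] G :=
  f + br.compr₂ r + (LieAlgebra.ad R G).toLinearMap.compl₁₂ r r
    + tr.flip ∘ₗ r - tr.compl₂ r + (tl.flip ∘ₗ r).compr₂ r - (tl.compl₂ r).compr₂ r

/-- The bracket `{-, -}` transported along `shear r`: `{x, y} - x ◁ r y + y ◁ r x`. -/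
def twistedBracket (tl : V →ₗ[R] G →ₗ[R] V) (br : V →ₗ[R] V →ₗ[R] V) (r : V →ₗ[R] G) :
    V →ₗ[R] V →ₗ[R] V :=
  br - tl.compl₂ r + tl.flip ∘ₗ r

variable (tl : V →ₗ[R] G →ₗ[R] V) (tr : V →ₗ[R] G →ₗ[R] G)
  (f : V →ₗ[R] V →ₗ[R] G) (br : V →ₗ[R] V →ₗ[R] V) (r : V →ₗ[R] G)

theorem twistedAction_apply (x : V) (g : G) :
    twistedAction tl tr r x g = tr x g + r (tl x g) - ⁅r x, g⁆ :=
  rfl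

theorem twistedCocycle_apply (x y : V) :
    twistedCocycle tl tr f br r x y = f x y + r (br x y) + ⁅r x, r y⁆
      + tr y (r x) - tr x (r y) + r (tl y (r x)) - r (tl x (r y)) :=
  rfl

theorem twistedBracket_apply (x y : V) :
    twistedBracket tl br r x y = br x y - tl x (r y) + tl y (r x) :=
  rfl

end Twist

section UnifiedProduct

variable {k G V : Type*} [Field k] [LieRing G] [LieAlgebra k G] [AddCommGroup V] [Module k V]
  {tl tl' : V →ₗ[k] G →ₗ[k] V} {tr tr' : V →ₗ[k] G →ₗ[k] G}
  {f f' : V →ₗ[k] V →ₗ[k] G} {br br' : V →ₗ[k] V →ₗ[k] V}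

theorem unifiedBracket_inr_inl (x : V) (g : G) :
    unifiedBracket tl tr f br (0, x) (g, 0) = (tr x g, tl x g) := by
  simp [unifiedBracket]

theorem unifiedBracket_inr_inr (x y : V) :
    unifiedBracket tl tr f br (0, x) (0, y) = (f x y, br x y) := by
  simp [unifiedBracket]

theorem unifiedBracket_inj :
    unifiedBracket tl' tr' f' br' = unifiedBracket tl tr f br ↔
      tl' = tl ∧ tr' = tr ∧ f' = f ∧ br' = br := by
  refine ⟨fun h => ?_, by rintro ⟨rfl, rfl, rfl, rfl⟩; rfl⟩
  have inr_inl (x : V) (g : G) : tr' x g = tr x g ∧ tl' x g = tl x g := by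
    simpa only [unifiedBracket_inr_inl, Prod.mk.injEq] using congr_fun₂ h (0, x) (g, 0)
  have inr_inr (x y : V) : f' x y = f x y ∧ br' x y = br x y := by
    simpa only [unifiedBracket_inr_inr, Prod.mk.injEq] using congr_fun₂ h (0, x) (0, y)
  exact ⟨LinearMap.ext₂ fun x g => (inr_inl x g).2, LinearMap.ext₂ fun x g => (inr_inl x g).1,
    LinearMap.ext₂ fun x y => (inr_inr x y).1, LinearMap.ext₂ fun x y => (inr_inr x y).2⟩

theorem shear_unifiedBracket (r : V →ₗ[k] G) (u w : G × V) :
    shear r (unifiedBracket tl tr f br u w) =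
      unifiedBracket tl (twistedAction tl tr r) (twistedCocycle tl tr f br r)
        (twistedBracket tl br r) (shear r u) (shear r w) := by
  obtain ⟨a, x⟩ := u
  obtain ⟨b, y⟩ := w
  ext
  · simp only [shear_apply, unifiedBracket, twistedAction_apply, twistedCocycle_apply, map_add,
      map_sub, lie_add, add_lie]
    rw [← lie_skew (r x) (r y), ← lie_skew (r y) a]
    abel
  · simp only [shear_apply, unifiedBracket, twistedBracket_apply, map_add]
    abel

theorem shear_map_unifiedBracket_iff (r : V →ₗ[k] G) :
    (∀ u w : G × V, shear r (unifiedBracket tl tr f br u w) =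
        unifiedBracket tl' tr' f' br' (shear r u) (shear r w)) ↔
      tl' = tl ∧ tr' = twistedAction tl tr r ∧ f' = twistedCocycle tl tr f br r ∧
        br' = twistedBracket tl br r := by
  rw [← unifiedBracket_inj, eq_comm (a := unifiedBracket tl' tr' f' br')]
  simp only [shear_unifiedBracket, funext_iff]
  symm
  exact (shear r).surjective.forall₂

end UnifiedProduct

theorem isomorphic_stab_costab_iff_cohomologous_general {k G V : Type*} [Field k]
    [LieRing G] [LieAlgebra k G] [AddCommGroup V] [Module k V]
    (tl : V →ₗ[k] G →ₗ[k] V) (tr : V →ₗ[k] G →ₗ[k] G)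
    (f : V →ₗ[k] V →ₗ[k] G) (br : V →ₗ[k] V →ₗ[k] V)
    (tl' : V →ₗ[k] G →ₗ[k] V) (tr' : V →ₗ[k] G →ₗ[k] G)
    (f' : V →ₗ[k] V →ₗ[k] G) (br' : V →ₗ[k] V →ₗ[k] V) :
    (∃ ψ : (G × V) ≃ₗ[k] G × V,
        (∀ u w : G × V, ψ (unifiedBracket tl tr f br u w) =
          unifiedBracket tl' tr' f' br' (ψ u) (ψ w)) ∧
        (∀ a : G, ψ (a, 0) = (a, 0)) ∧
        (∀ u : G × V, (ψ u).2 = u.2)) ↔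
      (tl' = tl ∧
        ∃ r : V →ₗ[k] G,
          (∀ (x : V) (g : G), tr' x g = tr x g + r (tl x g) - ⁅r x, g⁆) ∧
          (∀ x y : V,
            f' x y = f x y + r (br x y) + ⁅r x, r y⁆
              + tr y (r x) - tr x (r y) + r (tl y (r x)) - r (tl x (r y))) ∧
          (∀ x y : V, br' x y = br x y - tl x (r y) + tl y (r x))) := by
  simp only [← twistedAction_apply, ← twistedCocycle_apply, ← twistedBracket_apply,
    ← LinearMap.ext_iff₂, stabilizes_and_costabilizes_iff_exists_eq_shear]
  constructor
  · rintro ⟨_, map_bracket, r, rfl⟩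
    obtain ⟨htl, twist⟩ := (shear_map_unifiedBracket_iff r).mp map_bracket
    exact ⟨htl, r, twist⟩
  · rintro ⟨htl, r, twist⟩
    exact ⟨shear r, (shear_map_unifiedBracket_iff r).mpr ⟨htl, twist⟩, r, rfl⟩

/-- Two unified products are isomorphic via an isomorphism stabilizing `G` and
co-stabilizing `V` iff the two Lie extending structures are cohomologous
(Remark 2.7). -/
theorem isomorphic_stab_costab_iff_cohomologous {k G V : Type*} [Field k] [LieRing G]
    [LieAlgebra k G] [AddCommGroup V] [Module k V]
    (tl : V →ₗ[k] G →ₗ[k] V) (tr : V →ₗ[k] G →ₗ[k] G)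
    (f : V →ₗ[k] V →ₗ[k] G) (br : V →ₗ[k] V →ₗ[k] V)
    (tl' : V →ₗ[k] G →ₗ[k] V) (tr' : V →ₗ[k] G →ₗ[k] G)
    (f' : V →ₗ[k] V →ₗ[k] G) (br' : V →ₗ[k] V →ₗ[k] V)
    (hΩ : IsLieBracket (unifiedBracket tl tr f br))
    (hΩ' : IsLieBracket (unifiedBracket tl' tr' f' br')) :
    (∃ ψ : (G × V) ≃ₗ[k] G × V,
        (∀ u w : G × V, ψ (unifiedBracket tl tr f br u w) =
          unifiedBracket tl' tr' f' br' (ψ u) (ψ w)) ∧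
        (∀ a : G, ψ (a, 0) = (a, 0)) ∧
        (∀ u : G × V, (ψ u).2 = u.2)) ↔
      (tl' = tl ∧
        ∃ r : V →ₗ[k] G,
          (∀ (x : V) (g : G), tr' x g = tr x g + r (tl x g) - ⁅r x, g⁆) ∧
          (∀ x y : V,
            f' x y = f x y + r (br x y) + ⁅r x, r y⁆
              + tr y (r x) - tr x (r y) + r (tl y (r x)) - r (tl x (r y))) ∧
          (∀ x y : V, br' x y = br x y - tl x (r y) + tl y (r x))) := by
  exact isomorphic_stab_costab_iff_cohomologous_general tl tr f br tl' tr' f' br'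
end

section
/- Let k be a field, g a Lie algebra over k, V a k-vector space, and let (◁, ▷, f, {−,−}) be an extending datum of g through V in which ◁ is the trivial map (x ◁ g = 0 for all x, g). Then the unified product bracket [(g,x),(h,y)] = ([g,h] + x ▷ h − y ▷ g + f(x,y), {x,y}) is a Lie algebra bracket on g × V if and only if (V, {−,−}) is a Lie algebra and for all g, h ∈ g and x, y, z ∈ V: f(x,x) = 0; x ▷ [g,h] = [x ▷ g, h] + [g, x ▷ h]; {x,y} ▷ g = x ▷ (y ▷ g) − y ▷ (x ▷ g) + [g, f(x,y)]; and f(x,{y,z}) + f(y,{z,x}) + f(z,{x,y}) + x ▷ f(y,z) + y ▷ f(z,x) + z ▷ f(x,y) = 0. -/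
/-- The crossed product bracket
`[(g,x),(h,y)] = ([g,h] + x ▷ h - y ▷ g + f(x,y), {x,y})` on `G × V`,
i.e. the unified product bracket when the action `◁` is trivial. -/
def crossedProductBracket {k G V : Type*} [Field k] [LieRing G] [LieAlgebra k G]
    [AddCommGroup V] [Module k V]
    (tr : V →ₗ[k] G →ₗ[k] G) (f : V →ₗ[k] V →ₗ[k] G) (br : V →ₗ[k] V →ₗ[k] V) :
    G × V → G × V → G × V :=
  fun p q => (⁅p.1, q.1⁆ + tr p.2 q.1 - tr q.2 p.1 + f p.2 q.2, br p.2 q.2)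

/-!
The `V`-component of the Jacobiator of the crossed bracket is the Jacobiator of `{-,-}`. Its
`G`-component is a sum of defects of the remaining conditions: Leibniz defects, with one argument
in `V` and two in `G`, action defects, with two arguments in `V` and one in `G`, and one cocycle
defect, with three arguments in `V`. Every defect is additive in each argument, so evaluating the
Jacobiator at elements of `G × 0` and `0 × V` isolates them one at a time.
-/

/-- The Jacobiator of a binary operation `B`, whose vanishing is the Jacobi identity. -/
def jacobiator {L : Type*} [Add L] (B : L → L → L) (p q r : L) : L :=
  B p (B q r) + B q (B r p) + B r (B p q)

/-- The failure of `D` to satisfy the Leibniz rule at `⁅g, h⁆`. -/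
def leibnizDefect {G : Type*} [LieRing G] (D : G → G) (g h : G) : G :=
  D ⁅g, h⁆ - (⁅D g, h⁆ + ⁅g, D h⁆)

section CrossedBracket

variable {R G V : Type*} [CommSemiring R] [LieRing G] [Module R G] [AddCommGroup V] [Module R V]
  (tr : V →ₗ[R] G →ₗ[R] G) (f : V →ₗ[R] V →ₗ[R] G) (br : V →ₗ[R] V →ₗ[R] V)

/-- The formula of `crossedProductBracket` for a Lie ring `G` that is a module over a commutative
semiring. -/
def crossedBracket (p q : G × V) : G × V :=
  (⁅p.1, q.1⁆ + tr p.2 q.1 - tr q.2 p.1 + f p.2 q.2, br p.2 q.2)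

/-- The failure of `▷` to be an action of `(V, {-,-})` on `G` up to the inner derivation given by
`f`. -/
def actionDefect (x y : V) (g : G) : G :=
  tr (br x y) g - (tr x (tr y g) - tr y (tr x g) + ⁅g, f x y⁆)

/-- The failure of `f` to be a 2-cocycle on `(V, {-,-})`, with values in `G` under `▷`. -/
def cocycleDefect (x y z : V) : G :=
  f x (br y z) + f y (br z x) + f z (br x y) + tr x (f y z) + tr y (f z x) + tr z (f x y)

theorem crossedBracket_self (p : G × V) :
    crossedBracket tr f br p p = (f p.2 p.2, br p.2 p.2) := by
  simp [crossedBracket]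

theorem forall_crossedBracket_self_eq_zero_iff :
    (∀ p, crossedBracket tr f br p p = 0) ↔ (∀ x, br x x = 0) ∧ ∀ x, f x x = 0 := by
  simp only [crossedBracket_self, Prod.mk_eq_zero, Prod.forall, forall_const, forall_and, and_comm]

theorem snd_jacobiator_crossedBracket (p q r : G × V) :
    (jacobiator (crossedBracket tr f br) p q r).2 =
      jacobiator (br · ·) p.2 q.2 r.2 :=
  rfl

theorem fst_jacobiator_crossedBracket (g h l : G) (x y z : V) :
    (jacobiator (crossedBracket tr f br) (g, x) (h, y) (l, z)).1 =
      leibnizDefect (tr x) h l + leibnizDefect (tr y) l g + leibnizDefect (tr z) g h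
        - (actionDefect tr f br y z g + actionDefect tr f br z x h + actionDefect tr f br x y l)
        + cocycleDefect tr f br x y z := by
  simp only [jacobiator, crossedBracket, leibnizDefect, actionDefect, cocycleDefect,
    Prod.mk_add_mk, lie_add, lie_sub, map_add, map_sub]
  rw [← lie_skew (tr x h), ← lie_skew (tr y l), ← lie_skew (tr z g)]
  linear_combination (norm := abel) lie_jacobi g h l

theorem forall_fst_jacobiator_crossedBracket_eq_zero_iff :
    (∀ p q r, (jacobiator (crossedBracket tr f br) p q r).1 = 0) ↔
      (∀ x g h, leibnizDefect (tr x) g h = 0) ∧ (∀ x y g, actionDefect tr f br x y g = 0) ∧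
        ∀ x y z, cocycleDefect tr f br x y z = 0 := by
  simp only [Prod.forall, fst_jacobiator_crossedBracket]
  refine ⟨fun hJ ↦ ⟨fun x g h ↦ ?_, fun x y g ↦ ?_, fun x y z ↦ ?_⟩, ?_⟩
  · simpa [leibnizDefect, actionDefect, cocycleDefect] using hJ 0 x g 0 h 0
  · rw [← neg_eq_zero]
    simpa [leibnizDefect, actionDefect, cocycleDefect] using hJ g 0 0 x 0 y
  · simpa [leibnizDefect, actionDefect] using hJ 0 x 0 y 0 z
  · rintro ⟨hleibniz, haction, hcocycle⟩ g x h y l z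
    simp only [hleibniz, haction, hcocycle, add_zero, sub_zero]

theorem forall_jacobiator_crossedBracket_eq_zero_iff :
    (∀ p q r, jacobiator (crossedBracket tr f br) p q r = 0) ↔
      (∀ x y z, jacobiator (br · ·) x y z = 0) ∧
        (∀ x g h, leibnizDefect (tr x) g h = 0) ∧ (∀ x y g, actionDefect tr f br x y g = 0) ∧
          ∀ x y z, cocycleDefect tr f br x y z = 0 := by
  rw [← forall_fst_jacobiator_crossedBracket_eq_zero_iff]
  simp only [Prod.ext_iff, Prod.fst_zero, Prod.snd_zero, forall_and,
    snd_jacobiator_crossedBracket]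
  rw [and_comm]
  simp only [Prod.forall, forall_const]

theorem crossedProduct_isLieBracket_iff_general :
    IsLieBracket (crossedBracket tr f br) ↔
      (((∀ x : V, br x x = 0) ∧
        ∀ x y z : V, br x (br y z) + br y (br z x) + br z (br x y) = 0) ∧
       (∀ x : V, f x x = 0) ∧
       (∀ (x : V) (g h : G), tr x ⁅g, h⁆ = ⁅tr x g, h⁆ + ⁅g, tr x h⁆) ∧
       (∀ (x y : V) (g : G),
          tr (br x y) g = tr x (tr y g) - tr y (tr x g) + ⁅g, f x y⁆) ∧
       (∀ x y z : V,
          f x (br y z) + f y (br z x) + f z (br x y)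
            + tr x (f y z) + tr y (f z x) + tr z (f x y) = 0)) := by
  have hself := forall_crossedBracket_self_eq_zero_iff tr f br
  have hjacobi := forall_jacobiator_crossedBracket_eq_zero_iff tr f br
  simp only [leibnizDefect, actionDefect, sub_eq_zero] at hjacobi
  exact (and_congr hself hjacobi).trans and_and_and_comm

end CrossedBracket

/-- Section 3 (crossed products): when `◁` is trivial, the unified product is a Lie
algebra iff `(V, {-,-})` is a Lie algebra and `(G, V, ▷, f)` is a crossed system. -/
theorem crossedProduct_isLieBracket_iff {k G V : Type*} [Field k] [LieRing G]
    [LieAlgebra k G] [AddCommGroup V] [Module k V]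
    (tr : V →ₗ[k] G →ₗ[k] G) (f : V →ₗ[k] V →ₗ[k] G) (br : V →ₗ[k] V →ₗ[k] V) :
    IsLieBracket (crossedProductBracket tr f br) ↔
      (((∀ x : V, br x x = 0) ∧
        ∀ x y z : V, br x (br y z) + br y (br z x) + br z (br x y) = 0) ∧
       (∀ x : V, f x x = 0) ∧
       (∀ (x : V) (g h : G), tr x ⁅g, h⁆ = ⁅tr x g, h⁆ + ⁅g, tr x h⁆) ∧
       (∀ (x y : V) (g : G),
          tr (br x y) g = tr x (tr y g) - tr y (tr x g) + ⁅g, f x y⁆) ∧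
       (∀ x y z : V,
          f x (br y z) + f y (br z x) + f z (br x y)
            + tr x (f y z) + tr y (f z x) + tr z (f x y) = 0)) :=
  crossedProduct_isLieBracket_iff_general tr f br
end
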